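/- Let M be a non-interacting finite set of MDs and let TS be the equivalence relation on T × A generated by the union of the tuple-attribute relations ≈'_m for m ∈ M. Then D' is a minimally resolved instance (MRI) of D with respect to M if and only if for every equivalence class E of TS there is a value v_E that is most frequent in the multiset of values {D t a : (t,a) ∈ E} (counted with multiplicity) such that D' t a = v_E for every (t,a) ∈ E. -/

import Mathlib

/-- A matching dependency: a finite set `L` of attribute pairs (the similarity
condition to the left of the arrow) and a finite set `R` of attribute pairs
(the pairs of attributes to be matched, to the right of the arrow). -/
structure MD (A : Type*) where
  L : Finset (A × A)
  R : Finset (A × A)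

/-- `simPairs sim L D t₁ t₂` : the tuples `t₁, t₂` of instance `D` satisfy the
similarity condition given by the attribute pairs in `L`. -/
def simPairs {T A U : Type*} (sim : A → A → U → U → Prop)
    (L : Finset (A × A)) (D : T → A → U) (t₁ t₂ : T) : Prop :=
  ∀ p ∈ L, sim p.1 p.2 (D t₁ p.1) (D t₂ p.2)

/-- `Modifiable sim M D t c` : the value of attribute `c` of tuple `t` is
modifiable in instance `D` with respect to the set `M` of MDs (least such predicate). -/
inductive Modifiable {T A U : Type*} (sim : A → A → U → U → Prop)
    (M : Finset (MD A)) (D : T → A → U) : T → A → Prop where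
  | left_ne {m : MD A} {t s : T} {c e : A} :
      m ∈ M → (c, e) ∈ m.R → simPairs sim m.L D t s →
      D t c ≠ D s e → Modifiable sim M D t c
  | left_mod {m : MD A} {t s : T} {c e : A} :
      m ∈ M → (c, e) ∈ m.R → simPairs sim m.L D t s →
      Modifiable sim M D s e → Modifiable sim M D t c
  | right_ne {m : MD A} {t s : T} {c e : A} :
      m ∈ M → (e, c) ∈ m.R → simPairs sim m.L D s t →
      D s e ≠ D t c → Modifiable sim M D t c
  | right_mod {m : MD A} {t s : T} {c e : A} :
      m ∈ M → (e, c) ∈ m.R → simPairs sim m.L D s t →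
      Modifiable sim M D s e → Modifiable sim M D t c

/-- `(D, D') ⊨ M`. -/
def Sat {T A U : Type*} (sim : A → A → U → U → Prop)
    (M : Finset (MD A)) (D D' : T → A → U) : Prop :=
  (∀ m ∈ M, ∀ t₁ t₂ : T, simPairs sim m.L D t₁ t₂ →
      ∀ p ∈ m.R, D' t₁ p.1 = D' t₂ p.2) ∧
  (∀ (t : T) (g : A), ¬ Modifiable sim M D t g → D' t g = D t g)

/-- `D'` is a resolved instance of `D` wrt `M`: there is a finite (possibly empty)
chain of instances `D₁, …, Dₙ` with `(D,D₁) ⊨ M`, `(Dᵢ,Dᵢ₊₁) ⊨ M`, `(Dₙ,D') ⊨ M`,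
and `(D',D') ⊨ M`. -/
def ResolvedInstance {T A U : Type*} (sim : A → A → U → U → Prop)
    (M : Finset (MD A)) (D D' : T → A → U) : Prop :=
  ∃ L : List (T → A → U), List.Chain (Sat sim M) D (L ++ [D']) ∧ Sat sim M D' D'

/-- Number of changed values in going from `D` to `D'`. -/
noncomputable def numChanges {T A U : Type*} (D D' : T → A → U) : ℕ :=
  Nat.card {p : T × A // D p.1 p.2 ≠ D' p.1 p.2}

/-- `D'` is a minimally resolved instance (MRI) of `D` wrt `M`. -/
def IsMRI {T A U : Type*} (sim : A → A → U → U → Prop)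
    (M : Finset (MD A)) (D D' : T → A → U) : Prop :=
  ResolvedInstance sim M D D' ∧
  ∀ D'' : T → A → U, ResolvedInstance sim M D D'' →
    numChanges D D' ≤ numChanges D D''

/-- The edge relation of the similarity graph `G_D` on the vertex set `T × A`. -/
def SimEdge {T A U : Type*} (sim : A → A → U → U → Prop)
    (M : Finset (MD A)) (D : T → A → U) (p q : T × A) : Prop :=
  ∃ m ∈ M, (simPairs sim m.L D p.1 q.1 ∧ (p.2, q.2) ∈ m.R) ∨
           (simPairs sim m.L D q.1 p.1 ∧ (q.2, p.2) ∈ m.R)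

/-- A set of MDs is non-interacting if no attribute occurring to the right of
the arrow of one MD occurs to the left of the arrow of another. -/
def NonInteracting {A : Type*} (M : Finset (MD A)) : Prop :=
  ∀ m₁ ∈ M, ∀ m₂ ∈ M, ∀ p ∈ m₁.R, ∀ q ∈ m₂.L,
    p.1 ≠ q.1 ∧ p.1 ≠ q.2 ∧ p.2 ≠ q.1 ∧ p.2 ≠ q.2

/-- `TSrel sim M D` : the equivalence relation on tuple-attribute pairs
generated by the union of the relations `≈'_m`, `m ∈ M`. -/
def TSrel {T A U : Type*} (sim : A → A → U → U → Prop)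
    (M : Finset (MD A)) (D : T → A → U) : T × A → T × A → Prop :=
  Relation.EqvGen
    (fun p q : T × A => ∃ m ∈ M, simPairs sim m.L D p.1 q.1 ∧ (p.2, q.2) ∈ m.R)

/-! A resolution step replaces the values on each class of `TS` by a common value, except that a
class on which `D` is already constant keeps its value. Without interaction it changes no attribute
that the similarity conditions read, so `TS` stays the same, a second step changes nothing, and the
resolved instances are exactly the results of one step. The number of unchanged values of such an
instance is the sum, over the classes, of the number of times the common value occurs there in `D`.
The summands can be chosen independently of one another, so the sum is maximal iff each summand is;
a value that occurs in a class is always allowed there, so maximal among the allowed values means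
most frequent. -/

theorem isMaxOn_univ_pi_sum_iff {ι N : Type*} [Fintype ι] [AddCommMonoid N] [PartialOrder N]
    [IsOrderedCancelAddMonoid N] {α : ι → Type*} {S : ∀ i, Set (α i)} {φ : ∀ i, α i → N}
    {G : ∀ i, α i} (hG : G ∈ Set.univ.pi S) :
    IsMaxOn (fun H => ∑ i, φ i (H i)) (Set.univ.pi S) G ↔ ∀ i, IsMaxOn (φ i) (S i) (G i) := by
  classical
  refine ⟨fun hmax i b hb => ?_,
    fun hmax H hH => Finset.sum_le_sum fun i _ => hmax i (hH i (Set.mem_univ i))⟩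
  have hupdate : Function.update G i b ∈ Set.univ.pi S :=
    (Set.update_mem_pi_iff_of_mem hG).2 fun _ => hb
  have hle : ∑ j, φ j (Function.update G i b j) ≤ ∑ j, φ j (G j) := hmax hupdate
  simp only [Function.apply_update (fun j => φ j),
    Finset.sum_update_of_mem (Finset.mem_univ i)] at hle
  rw [Finset.sum_eq_add_sum_sdiff_singleton_of_mem (Finset.mem_univ i) fun j => φ j (G j)] at hle
  exact le_of_add_le_add_right hle

section Fiber

variable {X ι U : Type*} {π : X → ι} {f : X → U} {i : ι} {v : U}

/-- The multiplicity of `v` in the multiset of values of `f` on the fibre of `π` over `i`. -/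
noncomputable def fiberCount (π : X → ι) (f : X → U) (i : ι) (v : U) : ℕ :=
  Nat.card {x : X // π x = i ∧ f x = v}

/-- `v` is a most frequent value of `f` on the fibre of `π` over `i`. -/
def IsMostFrequentOnFiber (π : X → ι) (f : X → U) (i : ι) (v : U) : Prop :=
  (∃ x, π x = i ∧ f x = v) ∧ ∀ w, fiberCount π f i w ≤ fiberCount π f i v

/-- The values that may overwrite `f` on the fibre of `π` over `i` when a fibre on which `f` is
constant has to keep its value. Over a fibre on which `f` is not constant this is every value. -/
def admissibleValues (π : X → ι) (f : X → U) (i : ι) : Set U :=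
  {v | ∀ x, π x = i → (∀ y, π y = i → f y = f x) → v = f x}

theorem mem_admissibleValues_of_exists (h : ∃ x, π x = i ∧ f x = v) :
    v ∈ admissibleValues π f i := by
  obtain ⟨y, hy, rfl⟩ := h
  exact fun x _ hconst => hconst y hy

variable [Finite X]

theorem fiberCount_pos_iff : 0 < fiberCount π f i v ↔ ∃ x, π x = i ∧ f x = v := by
  rw [fiberCount, Finite.card_pos_iff, nonempty_subtype]

theorem isMaxOn_fiberCount_iff (hi : ∃ x, π x = i) :
    IsMaxOn (fiberCount π f i) (admissibleValues π f i) v ↔ IsMostFrequentOnFiber π f i v := by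
  refine ⟨fun hmax => ?_, fun hv w _ => hv.2 w⟩
  have hle (w : U) : fiberCount π f i w ≤ fiberCount π f i v := by
    obtain hw | hw := Nat.eq_zero_or_pos (fiberCount π f i w)
    · exact hw ▸ Nat.zero_le _
    · exact hmax (mem_admissibleValues_of_exists (fiberCount_pos_iff.1 hw))
  obtain ⟨x, hx⟩ := hi
  exact ⟨fiberCount_pos_iff.1 ((fiberCount_pos_iff.2 ⟨x, hx, rfl⟩).trans_le (hle (f x))), hle⟩

theorem sum_fiberCount [Fintype ι] (G : ι → U) :
    ∑ i, fiberCount π f i (G i) = Nat.card {x // f x = G (π x)} := by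
  rw [← Nat.card_congr (Equiv.sigmaFiberEquiv fun x : {x // f x = G (π x)} => π x), Nat.card_sigma]
  refine Finset.sum_congr rfl fun i _ => Nat.card_congr
    { toFun x := ⟨⟨x, by rw [x.2.1, x.2.2]⟩, x.2.1⟩
      invFun x := ⟨x.1, x.2, by rw [x.1.2, x.2]⟩ }

theorem card_ne_add_sum_fiberCount [Fintype ι] (G : ι → U) :
    Nat.card {x // f x ≠ G (π x)} + ∑ i, fiberCount π f i (G i) = Nat.card X := by
  classical
  rw [sum_fiberCount, add_comm, ← Nat.card_sum,
    Nat.card_congr (Equiv.sumCompl fun x => f x = G (π x))]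

theorem isMinOn_card_ne_comp_iff (hπ : π.Surjective) {G : ι → U}
    (hG : G ∈ Set.univ.pi (admissibleValues π f)) :
    IsMinOn (fun H => Nat.card {x // f x ≠ H (π x)}) (Set.univ.pi (admissibleValues π f)) G ↔
      ∀ i, IsMostFrequentOnFiber π f i (G i) := by
  have := Finite.of_surjective π hπ
  have := Fintype.ofFinite ι
  calc
    _ ↔ IsMaxOn (fun H => ∑ i, fiberCount π f i (H i))
          (Set.univ.pi (admissibleValues π f)) G := by
      simp only [isMinOn_iff, isMaxOn_iff]
      refine forall₂_congr fun H _ => ?_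
      have hcardG := card_ne_add_sum_fiberCount (π := π) (f := f) G
      have hcardH := card_ne_add_sum_fiberCount (π := π) (f := f) H
      lia
    _ ↔ ∀ i, IsMaxOn (fiberCount π f i) (admissibleValues π f i) (G i) :=
      isMaxOn_univ_pi_sum_iff hG
    _ ↔ ∀ i, IsMostFrequentOnFiber π f i (G i) :=
      forall_congr' fun i => isMaxOn_fiberCount_iff (hπ i)

end Fiber

section MatchingDependency

variable {T A U : Type*} {sim : A → A → U → U → Prop} {M : Finset (MD A)} {D D' D'' : T → A → U}

theorem TSrel.of_mem_R {m : MD A} (hm : m ∈ M) {t s : T} (hsim : simPairs sim m.L D t s)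
    {c e : A} (hR : (c, e) ∈ m.R) : TSrel sim M D (t, c) (s, e) :=
  .rel _ _ ⟨m, hm, hsim, hR⟩

theorem Modifiable.exists_mem_R {t : T} {c : A} (h : Modifiable sim M D t c) :
    ∃ m ∈ M, ∃ p ∈ m.R, p.1 = c ∨ p.2 = c := by
  cases h with
  | left_ne hm hR | left_mod hm hR => exact ⟨_, hm, _, hR, .inl rfl⟩
  | right_ne hm hR | right_mod hm hR => exact ⟨_, hm, _, hR, .inr rfl⟩

theorem Modifiable.exists_ne {t : T} {c : A} (h : Modifiable sim M D t c) :
    ∃ q, TSrel sim M D (t, c) q ∧ D q.1 q.2 ≠ D t c := by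
  have transfer {p q : T × A} (hpq : TSrel sim M D p q) :
      (∃ r, TSrel sim M D q r ∧ D r.1 r.2 ≠ D q.1 q.2) →
        ∃ r, TSrel sim M D p r ∧ D r.1 r.2 ≠ D p.1 p.2 := by
    rintro ⟨r, hqr, hne⟩
    by_cases hrp : D r.1 r.2 = D p.1 p.2
    · exact ⟨q, hpq, fun hqp => hne (hrp.trans hqp.symm)⟩
    · exact ⟨r, hpq.trans _ _ _ hqr, hrp⟩
  induction h with
  | left_ne hm hR hsim hne => exact ⟨_, .of_mem_R hm hsim hR, hne.symm⟩
  | left_mod hm hR hsim _ ih => exact transfer (.of_mem_R hm hsim hR) ih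
  | right_ne hm hR hsim hne => exact ⟨_, (TSrel.of_mem_R hm hsim hR).symm, hne⟩
  | right_mod hm hR hsim _ ih => exact transfer (TSrel.of_mem_R hm hsim hR).symm ih

theorem TSrel.modifiable_iff {p q : T × A} (h : TSrel sim M D p q) :
    Modifiable sim M D p.1 p.2 ↔ Modifiable sim M D q.1 q.2 := by
  induction h with
  | rel p q h =>
    obtain ⟨m, hm, hsim, hR⟩ := h
    exact ⟨.right_mod hm hR hsim, .left_mod hm hR hsim⟩
  | refl => rfl
  | symm _ _ _ ih => exact ih.symm
  | trans _ _ _ _ _ ih₁ ih₂ => exact ih₁.trans ih₂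

theorem TSrel.modifiable_of_ne {p q : T × A} (h : TSrel sim M D p q)
    (hne : D p.1 p.2 ≠ D q.1 q.2) : Modifiable sim M D p.1 p.2 := by
  induction h with
  | rel p q h =>
    obtain ⟨m, hm, hsim, hR⟩ := h
    exact .left_ne hm hR hsim hne
  | refl => exact absurd rfl hne
  | symm p q h ih => exact (TSrel.modifiable_iff h).1 (ih hne.symm)
  | trans p q r hpq _ ih₁ ih₂ =>
    by_cases heq : D p.1 p.2 = D q.1 q.2
    · exact (TSrel.modifiable_iff hpq).2 (ih₂ (heq ▸ hne))
    · exact ih₁ heq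

theorem modifiable_iff_exists_ne {p : T × A} :
    Modifiable sim M D p.1 p.2 ↔ ∃ q, TSrel sim M D p q ∧ D q.1 q.2 ≠ D p.1 p.2 :=
  ⟨Modifiable.exists_ne, fun ⟨_, hpq, hne⟩ => hpq.modifiable_of_ne hne.symm⟩

theorem Sat.eq_of_tsRel (h : Sat sim M D D') {p q : T × A} (hpq : TSrel sim M D p q) :
    D' p.1 p.2 = D' q.1 q.2 := by
  induction hpq with
  | rel p q hpq =>
    obtain ⟨m, hm, hsim, hR⟩ := hpq
    exact h.1 m hm _ _ hsim _ hR
  | refl => rfl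
  | symm _ _ _ ih => exact ih.symm
  | trans _ _ _ _ _ ih₁ ih₂ => exact ih₁.trans ih₂

namespace NonInteracting

variable (hM : NonInteracting M)
include hM

theorem not_modifiable_of_mem_L {m : MD A} (hm : m ∈ M) {p : A × A} (hp : p ∈ m.L) {t : T} {c : A}
    (hc : c = p.1 ∨ c = p.2) : ¬ Modifiable sim M D t c := by
  intro hmod
  obtain ⟨m', hm', q, hq, hqc⟩ := hmod.exists_mem_R
  have := hM m' hm' m hm q hq p hp
  grind

theorem simPairs_iff (h : Sat sim M D D') {m : MD A} (hm : m ∈ M) {t s : T} :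
    simPairs sim m.L D' t s ↔ simPairs sim m.L D t s :=
  forall₂_congr fun p hp => by
    rw [h.2 t p.1 (hM.not_modifiable_of_mem_L hm hp (.inl rfl)),
      h.2 s p.2 (hM.not_modifiable_of_mem_L hm hp (.inr rfl))]

theorem tsRel_eq (h : Sat sim M D D') : TSrel sim M D' = TSrel sim M D := by
  refine congrArg Relation.EqvGen (funext₂ fun p q => propext ?_)
  exact exists_congr fun m => and_congr_right fun hm => and_congr_left' (hM.simPairs_iff h hm)

theorem eq_of_sat_of_sat (h : Sat sim M D D') (h' : Sat sim M D' D'') : D'' = D' := by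
  funext t c
  refine h'.2 t c fun hmod => ?_
  obtain ⟨q, hq, hne⟩ := hmod.exists_ne
  rw [hM.tsRel_eq h] at hq
  exact hne (h.eq_of_tsRel hq).symm

theorem sat_of_isChain {L : List (T → A → U)}
    (h : List.IsChain (Sat sim M) (D :: (L ++ [D']))) : Sat sim M D D' := by
  induction L generalizing D with
  | nil => simpa using h
  | cons D₁ L ih =>
    obtain ⟨hD₁, hchain⟩ := List.isChain_cons_cons.1 h
    rwa [hM.eq_of_sat_of_sat hD₁ (ih hchain)]

theorem resolvedInstance_iff : ResolvedInstance sim M D D' ↔ Sat sim M D D' := by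
  refine ⟨fun ⟨_, hchain, _⟩ => hM.sat_of_isChain hchain, fun h => ?_⟩
  refine ⟨[], .cons_cons h (.singleton _), fun m hm t s hsim => ?_, fun _ _ _ => rfl⟩
  exact h.1 m hm t s ((hM.simPairs_iff h hm).1 hsim)

end NonInteracting

variable (sim M D) in
/-- The type of equivalence classes of `TS`, with `TSrel` as a setoid. -/
abbrev TSClass : Type _ :=
  Quotient (Relation.EqvGen.setoid
    fun p q : T × A => ∃ m ∈ M, simPairs sim m.L D p.1 q.1 ∧ (p.2, q.2) ∈ m.R)

variable (sim M D) in
/-- The equivalence class of `TS` that contains a given tuple-attribute pair. -/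
abbrev toTSClass (p : T × A) : TSClass sim M D := Quotient.mk _ p

theorem toTSClass_eq_iff {p q : T × A} :
    toTSClass sim M D q = toTSClass sim M D p ↔ TSrel sim M D p q :=
  eq_comm.trans Quotient.eq

variable (sim M D) in
/-- The possible values on a class of `TS` after one resolution step from `D`. -/
abbrev resolvedValues : TSClass sim M D → Set U :=
  admissibleValues (toTSClass sim M D) (Function.uncurry D)

/-- The instance that takes on each class of `TS` the constant value given by `G`. -/
def instanceOfClassValues (G : TSClass sim M D → U) : T → A → U :=
  fun t a => G (toTSClass sim M D (t, a))

theorem sat_instanceOfClassValues {G : TSClass sim M D → U}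
    (hG : G ∈ Set.univ.pi (resolvedValues sim M D)) :
    Sat sim M D (instanceOfClassValues G) := by
  refine ⟨fun m hm t s hsim p hp =>
    congrArg G (toTSClass_eq_iff.2 (TSrel.of_mem_R hm hsim hp).symm), fun t a hmod => ?_⟩
  refine hG _ (Set.mem_univ _) (t, a) rfl fun q hq => ?_
  by_contra hne
  exact hmod (modifiable_iff_exists_ne.2 ⟨q, toTSClass_eq_iff.1 hq, hne⟩)

theorem sat_iff_exists_classValues :
    Sat sim M D D' ↔
      ∃ G ∈ Set.univ.pi (resolvedValues sim M D), D' = instanceOfClassValues G := by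
  refine ⟨fun h => ?_, ?_⟩
  · refine ⟨Quotient.lift (Function.uncurry D') fun p q hpq => h.eq_of_tsRel hpq, ?_, rfl⟩
    rintro _ - p rfl hconst
    refine h.2 p.1 p.2 fun hmod => ?_
    obtain ⟨q, hpq, hne⟩ := hmod.exists_ne
    exact hne (hconst q (toTSClass_eq_iff.2 hpq))
  · rintro ⟨G, hG, rfl⟩
    exact sat_instanceOfClassValues hG

theorem isMRI_iff_exists_classValues [Finite T] [Finite A] (hM : NonInteracting M) :
    IsMRI sim M D D' ↔ ∃ G : TSClass sim M D → U, D' = instanceOfClassValues G ∧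
      ∀ c, IsMostFrequentOnFiber (toTSClass sim M D) (Function.uncurry D) c (G c) := by
  simp only [IsMRI, hM.resolvedInstance_iff, sat_iff_exists_classValues]
  constructor
  · rintro ⟨⟨G, hG, rfl⟩, hmin⟩
    exact ⟨G, rfl, (isMinOn_card_ne_comp_iff Quotient.mk_surjective hG).1
      fun H hH => hmin _ ⟨H, hH, rfl⟩⟩
  · rintro ⟨G, rfl, hfreq⟩
    have hG : G ∈ Set.univ.pi (resolvedValues sim M D) :=
      fun c _ => mem_admissibleValues_of_exists (hfreq c).1
    refine ⟨⟨G, hG, rfl⟩, ?_⟩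
    rintro _ ⟨H, hH, rfl⟩
    exact (isMinOn_card_ne_comp_iff Quotient.mk_surjective hG).2 hfreq hH

theorem isMostFrequentOnFiber_toTSClass_iff {p : T × A} {v : U} :
    IsMostFrequentOnFiber (toTSClass sim M D) (Function.uncurry D) (toTSClass sim M D p) v ↔
      (∃ q, TSrel sim M D p q ∧ D q.1 q.2 = v) ∧
        ∀ w, Nat.card {q : T × A // TSrel sim M D p q ∧ D q.1 q.2 = w} ≤
          Nat.card {q : T × A // TSrel sim M D p q ∧ D q.1 q.2 = v} := by
  simp only [IsMostFrequentOnFiber, fiberCount, toTSClass_eq_iff, Function.uncurry]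

theorem mri_iff_most_frequent_general [Finite T] [Finite A] (hM : NonInteracting M) :
    IsMRI sim M D D' ↔
      ∀ p : T × A, ∃ v : U,
        (∃ q : T × A, TSrel sim M D p q ∧ D q.1 q.2 = v) ∧
        (∀ w : U,
          Nat.card {q : T × A // TSrel sim M D p q ∧ D q.1 q.2 = w} ≤
          Nat.card {q : T × A // TSrel sim M D p q ∧ D q.1 q.2 = v}) ∧
        (∀ q : T × A, TSrel sim M D p q → D' q.1 q.2 = v) := by
  simp only [isMRI_iff_exists_classValues hM, ← and_assoc, ← isMostFrequentOnFiber_toTSClass_iff]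
  constructor
  · rintro ⟨G, rfl, hfreq⟩ p
    exact ⟨_, hfreq _, fun q hpq => congrArg G (toTSClass_eq_iff.2 hpq)⟩
  · intro h
    have hconst (p q : T × A) (hpq : TSrel sim M D p q) : D' p.1 p.2 = D' q.1 q.2 := by
      obtain ⟨v, -, hv⟩ := h p
      rw [hv p (.refl p), hv q hpq]
    refine ⟨Quotient.lift (Function.uncurry D') hconst, rfl, Quotient.ind fun p => ?_⟩
    obtain ⟨v, hfreq, hv⟩ := h p
    have hpv : D' p.1 p.2 = v := hv p (.refl p)
    rwa [← hpv] at hfreq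

end MatchingDependency

/-- Corollary A.1: for a non-interacting set `M` of MDs, `D'` is an MRI of `D`
iff on each equivalence class of `TS` it takes a constant value that is most
frequent among the `D`-values of the class (counted with multiplicity). -/
theorem mri_iff_most_frequent {T A U : Type*} [Fintype T] [Fintype A]
    (sim : A → A → U → U → Prop)
    (hsym : ∀ (a b : A) (x y : U), sim a b x y → sim b a y x)
    (hsub : ∀ (a b : A) (x y : U), x = y → sim a b x y)
    (M : Finset (MD A)) (hni : NonInteracting M)
    (D D' : T → A → U) :
    IsMRI sim M D D' ↔
      ∀ p : T × A, ∃ v : U,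
        (∃ q : T × A, TSrel sim M D p q ∧ D q.1 q.2 = v) ∧
        (∀ w : U,
          Nat.card {q : T × A // TSrel sim M D p q ∧ D q.1 q.2 = w} ≤
          Nat.card {q : T × A // TSrel sim M D p q ∧ D q.1 q.2 = v}) ∧
        (∀ q : T × A, TSrel sim M D p q → D' q.1 q.2 = v) :=
  mri_iff_most_frequent_general hni
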